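/- Let s ≥ 1, |z| < 1, and let a₀,…,a_{2s}, b₁,…,b_{2s} be complex with Re(a₀) > 0 and Re(b_i) > Re(a_i) > 0 for all i. Then J_{2s}(a₀,…,a_{2s}; b₁,…,b_{2s}; z) = (∏_{j=1}^{2s} Γ(a_j)Γ(b_j−a_j)/Γ(b_j)) · ∑_{k₁,…,k_s ≥ 0} z^{k₁+⋯+k_s} ∏_{j=1}^{s} [(b_{2s−2j+2} − a_{2s−2j+2})_{k_j} / k_j!] · [(a_{2s−2j+1})_{k₁+⋯+k_j} / (b_{2s−2j+1})_{k₁+⋯+k_j}] · [(a_{2s−2j})_{k₁+⋯+k_j} / (b_{2s−2j+2})_{k₁+⋯+k_j}]. -/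

import Mathlib

open MeasureTheory

/-- Pochhammer symbol `(x)_k = x(x+1)⋯(x+k-1)`. -/
noncomputable def poch (x : ℂ) (k : ℕ) : ℂ := ∏ i ∈ Finset.range k, (x + (i : ℂ))

/-- Generalized hypergeometric series with upper parameters `α`, lower parameters `β`. -/
noncomputable def hyp (α β : List ℂ) (z : ℂ) : ℂ :=
  ∑' k : ℕ, ((α.map fun w => poch w k).prod /
    ((β.map fun w => poch w k).prod * (Nat.factorial k : ℂ))) * z ^ k

/-- Nested expression: `nestR [x₁,…,x_m] = 1 - (1 - (⋯(1 - x_m)x_{m-1}⋯))x₁`. -/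
def nestR : List ℝ → ℝ
  | [] => 1
  | t :: rest => 1 - nestR rest * t

/-- The Vasilyev-type integral `J_m(a₀,…,a_m; b₁,…,b_m; z)`. -/
noncomputable def Jint (m : ℕ) (a b : ℕ → ℂ) (z : ℂ) : ℂ :=
  ∫ x in Set.univ.pi fun _ : Fin m => Set.Ioo (0:ℝ) 1,
    (∏ i : Fin m, ((x i : ℂ) ^ (a (i.1+1) - 1) *
        ((1 - x i : ℝ) : ℂ) ^ (b (i.1+1) - a (i.1+1) - 1))) /
      ((1 - ((nestR (List.ofFn x).tail * (List.ofFn x).headI : ℝ) : ℂ) * z) ^ (a 0))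

/-!
Expanding two levels at a time, `1 - nestR [x₁, x₂, l…] = x₁ x₂ (1 - nestR l) + x₁ (1 - x₂)`, so on
the cube `1 - nestR x` is a sum of `s` nonnegative monomials in the `x i` and `1 - x i` with total
at most `1`. For `‖z‖ < 1` the multinomial form of the binomial series of
`(1 - (1 - nestR x) z) ^ (-a₀)` converges absolutely, uniformly in `x`, and may be integrated
termwise against the beta densities. Each term is a product of one-dimensional beta integrals; the
innermost pair of variables carries the partial sum `k₁`, the next one `k₁ + k₂`, and so on. The
resulting Pochhammer symbols of the `a` with even index sit at `k₁ + ⋯ + k_{j-1}`, and the factor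
`(a₀)_{k₁ + ⋯ + k_s}` of the binomial series completes the shift to `k₁ + ⋯ + k_j`.
-/

lemma poch_zero (x : ℂ) : poch x 0 = 1 := Finset.prod_range_zero _

lemma poch_eq_ascPochhammer_eval (x : ℂ) (n : ℕ) : poch x n = (ascPochhammer ℂ n).eval x := by
  induction n with
  | zero => simp [poch_zero]
  | succ n ih => simp [poch, Finset.prod_range_succ, ascPochhammer_succ_right, ← ih]

lemma Gamma_add_natCast {x : ℂ} (hx : 0 < x.re) (n : ℕ) :
    Complex.Gamma (x + n) = poch x n * Complex.Gamma x := by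
  have hne (k : ℕ) : x ≠ -k := by
    rintro rfl
    exact k.cast_nonneg.not_gt (by simpa using hx : (k : ℝ) < 0)
  rw [poch_eq_ascPochhammer_eval, ← Complex.Gamma_add_nat_div_Gamma_eq x hne,
    div_mul_cancel₀ _ (Complex.Gamma_ne_zero_of_re_pos hx)]

lemma poch_div_factorial (a : ℂ) (n : ℕ) : poch a n / n.factorial = Ring.choose (a + n - 1) n := by
  have hn : (n.factorial : ℂ) ≠ 0 := by exact_mod_cast n.factorial_ne_zero
  rw [← Ring.multichoose_eq, div_eq_iff hn, poch_eq_ascPochhammer_eval,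
    ← Polynomial.ascPochhammer_smeval_eq_eval, ← Ring.factorial_nsmul_multichoose_eq_ascPochhammer,
    nsmul_eq_mul, mul_comm]

lemma hasSum_poch_div_factorial_mul_pow (a : ℂ) {w : ℂ} (hw : ‖w‖ < 1) :
    HasSum (fun n : ℕ => poch a n / n.factorial * w ^ n) (1 / (1 - w) ^ a) := by
  have hball : w ∈ Metric.eball (0 : ℂ) 1 := by
    rw [mem_eball_zero_iff, ← ofReal_norm, ← ENNReal.ofReal_one]
    exact (ENNReal.ofReal_lt_ofReal_iff one_pos).2 hw
  simpa [poch_div_factorial, mul_comm] using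
    (Complex.one_div_one_sub_cpow_hasFPowerSeriesOnBall_zero a).hasSum hball

section MultinomialSeries

variable {ι : Type*} [Fintype ι]

lemma sum_piAntidiag_multinomial [DecidableEq ι] {R : Type*} [CommSemiring R] (c : ℕ → R)
    (w : ι → R) (N : ℕ) :
    ∑ k ∈ Finset.piAntidiag Finset.univ N,
      c (∑ i, k i) * (Nat.multinomial Finset.univ k * ∏ i, w i ^ k i) = c N * (∑ i, w i) ^ N := by
  rw [Finset.sum_pow_eq_sum_piAntidiag, Finset.mul_sum]
  refine Finset.sum_congr rfl fun k hk => ?_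
  rw [(Finset.mem_piAntidiag.1 hk).1]

lemma sum_multinomial_le_tsum {c : ℕ → ℝ} {w : ι → ℝ} (hc : ∀ N, 0 ≤ c N) (hw : ∀ i, 0 ≤ w i)
    (hsum : Summable fun N => c N * (∑ i, w i) ^ N) (t : Finset (ι → ℕ)) :
    ∑ k ∈ t, c (∑ i, k i) * (Nat.multinomial Finset.univ k * ∏ i, w i ^ k i) ≤
      ∑' N, c N * (∑ i, w i) ^ N := by
  classical
  have hw' : 0 ≤ ∑ i, w i := Finset.sum_nonneg fun i _ => hw i
  have hterm (k : ι → ℕ) :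
      0 ≤ c (∑ i, k i) * (Nat.multinomial Finset.univ k * ∏ i, w i ^ k i) :=
    mul_nonneg (hc _) (mul_nonneg (Nat.cast_nonneg _)
      (Finset.prod_nonneg fun i _ => pow_nonneg (hw i) _))
  calc ∑ k ∈ t, c (∑ i, k i) * (Nat.multinomial Finset.univ k * ∏ i, w i ^ k i)
      = ∑ N ∈ t.image fun k => ∑ i, k i, ∑ k ∈ t with ∑ i, k i = N,
          c (∑ i, k i) * (Nat.multinomial Finset.univ k * ∏ i, w i ^ k i) :=
        (Finset.sum_fiberwise_of_maps_to (fun _ => Finset.mem_image_of_mem _) _).symm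
    _ ≤ ∑ N ∈ t.image fun k => ∑ i, k i, c N * (∑ i, w i) ^ N := by
        refine Finset.sum_le_sum fun N _ => ?_
        rw [← sum_piAntidiag_multinomial c w N]
        refine Finset.sum_le_sum_of_subset_of_nonneg (fun k hk => ?_) fun k _ _ => hterm k
        simpa using (Finset.mem_filter.1 hk).2
    _ ≤ ∑' N, c N * (∑ i, w i) ^ N :=
        hsum.sum_le_tsum _ fun N _ => mul_nonneg (hc N) (pow_nonneg hw' N)

section RCLike

variable {𝕜 : Type*} [RCLike 𝕜] {c : ℕ → 𝕜} {w : ι → 𝕜}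

lemma sum_norm_multinomial_le_tsum (hsum : Summable fun N => ‖c N‖ * (∑ i, ‖w i‖) ^ N)
    (t : Finset (ι → ℕ)) :
    ∑ k ∈ t, ‖c (∑ i, k i) * (Nat.multinomial Finset.univ k * ∏ i, w i ^ k i)‖ ≤
      ∑' N, ‖c N‖ * (∑ i, ‖w i‖) ^ N := by
  simp only [norm_mul, norm_prod, norm_pow, RCLike.norm_natCast]
  exact sum_multinomial_le_tsum (fun _ => norm_nonneg _) (fun _ => norm_nonneg _) hsum t

lemma hasSum_multinomial (hsum : Summable fun N => ‖c N‖ * (∑ i, ‖w i‖) ^ N) :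
    HasSum (fun k : ι → ℕ => c (∑ i, k i) * (Nat.multinomial Finset.univ k * ∏ i, w i ^ k i))
      (∑' N, c N * (∑ i, w i) ^ N) := by
  classical
  have hs : Summable fun k : ι → ℕ =>
      c (∑ i, k i) * (Nat.multinomial Finset.univ k * ∏ i, w i ^ k i) :=
    .of_norm (summable_of_sum_le (fun _ => norm_nonneg _) (sum_norm_multinomial_le_tsum hsum))
  have hfiber (N : ℕ) :
      (fun k : ι → ℕ => ∑ i, k i) ⁻¹' {N} = ↑(Finset.piAntidiag (Finset.univ : Finset ι) N) := by
    ext k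
    simp
  convert hs.hasSum using 1
  rw [← (hs.hasSum.tsum_fiberwise fun k => ∑ i, k i).tsum_eq]
  refine tsum_congr fun N => ?_
  rw [hfiber]
  exact ((Finset.tsum_subtype' _ fun k : ι → ℕ =>
    c (∑ i, k i) * (Nat.multinomial Finset.univ k * ∏ i, w i ^ k i)).trans
      (sum_piAntidiag_multinomial c w N)).symm

end RCLike

lemma poch_div_prod_factorial (a : ℂ) (k : ι → ℕ) :
    poch a (∑ i, k i) / (∏ i, ((k i).factorial : ℂ)) =
      poch a (∑ i, k i) / (∑ i, k i).factorial * Nat.multinomial Finset.univ k := by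
  have hprod : (∏ i, ((k i).factorial : ℂ)) ≠ 0 :=
    Finset.prod_ne_zero_iff.2 fun i _ => by exact_mod_cast (k i).factorial_ne_zero
  have hfact : ((∑ i, k i).factorial : ℂ) ≠ 0 := by exact_mod_cast Nat.factorial_ne_zero _
  have hspec : (∏ i, ((k i).factorial : ℂ)) * Nat.multinomial Finset.univ k =
      (∑ i, k i).factorial := by exact_mod_cast Nat.multinomial_spec Finset.univ k
  field_simp
  linear_combination -poch a (∑ i, k i) * hspec

lemma summable_norm_poch_div_factorial_mul_pow (a : ℂ) {r : ℝ} (hr0 : 0 ≤ r) (hr : r < 1) :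
    Summable fun N : ℕ => ‖poch a N / N.factorial‖ * r ^ N := by
  have hr' : ‖(r : ℂ)‖ < 1 := by rwa [Complex.norm_of_nonneg hr0]
  simpa [abs_of_nonneg hr0] using (hasSum_poch_div_factorial_mul_pow a hr').summable.norm

theorem hasSum_poch_div_prod_factorial_mul_prod_pow (a : ℂ) {w : ι → ℂ} (hw : ∑ i, ‖w i‖ < 1) :
    HasSum (fun k : ι → ℕ =>
        poch a (∑ i, k i) / (∏ i, ((k i).factorial : ℂ)) * ∏ i, w i ^ k i)
      (1 / (1 - ∑ i, w i) ^ a) := by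
  rw [← (hasSum_poch_div_factorial_mul_pow a ((norm_sum_le _ _).trans_lt hw)).tsum_eq]
  simp only [poch_div_prod_factorial, mul_assoc]
  exact hasSum_multinomial (c := fun N => poch a N / N.factorial)
    (summable_norm_poch_div_factorial_mul_pow a (Finset.sum_nonneg fun _ _ => norm_nonneg _) hw)

lemma sum_norm_poch_div_prod_factorial_mul_prod_pow_le (a : ℂ) {w : ι → ℂ} {r : ℝ}
    (hwr : ∑ i, ‖w i‖ ≤ r) (hr : r < 1) (t : Finset (ι → ℕ)) :
    ∑ k ∈ t, ‖poch a (∑ i, k i) / (∏ i, ((k i).factorial : ℂ)) * ∏ i, w i ^ k i‖ ≤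
      ∑' N : ℕ, ‖poch a N / N.factorial‖ * r ^ N := by
  have hw : 0 ≤ ∑ i, ‖w i‖ := Finset.sum_nonneg fun _ _ => norm_nonneg _
  have hsum := summable_norm_poch_div_factorial_mul_pow a hw (hwr.trans_lt hr)
  simp only [poch_div_prod_factorial, mul_assoc]
  refine (sum_norm_multinomial_le_tsum (c := fun N => poch a N / N.factorial) hsum t).trans ?_
  refine hsum.tsum_le_tsum (fun N => ?_)
    (summable_norm_poch_div_factorial_mul_pow a (hw.trans hwr) hr)
  gcongr

end MultinomialSeries

section Integral

variable {X : Type*} [MeasurableSpace X] {μ : Measure X}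

lemma hasSum_integral_of_sum_norm_le {κ E : Type*} [Countable κ] [NormedAddCommGroup E]
    [NormedSpace ℝ E] {F : κ → X → E} {f : X → E} {g : X → ℝ}
    (hF : ∀ k, AEStronglyMeasurable (F k) μ) (hg : Integrable g μ)
    (hFg : ∀ᵐ x ∂μ, ∀ t : Finset κ, ∑ k ∈ t, ‖F k x‖ ≤ g x)
    (hf : ∀ᵐ x ∂μ, HasSum (fun k => F k x) (f x)) :
    HasSum (fun k => ∫ x, F k x ∂μ) (∫ x, f x ∂μ) := by
  have hF_int (k : κ) : Integrable (F k) μ :=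
    hg.mono' (hF k) (hFg.mono fun x hx => by simpa using hx {k})
  have hF_sum : Summable fun k => ∫ x, ‖F k x‖ ∂μ := by
    refine summable_of_sum_le (c := ∫ x, g x ∂μ) (fun k => integral_nonneg fun _ => norm_nonneg _)
      fun t => ?_
    rw [← integral_finsetSum _ fun k _ => (hF_int k).norm]
    exact integral_mono_ae (integrable_finsetSum _ fun k _ => (hF_int k).norm) hg
      (hFg.mono fun x hx => hx t)
  rw [← integral_congr_ae (hf.mono fun x hx => hx.tsum_eq)]
  exact hasSum_integral_of_summable_integral_norm hF_int hF_sum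

theorem hasSum_integral_div_one_sub_sum_cpow {ι : Type*} [Fintype ι] {W : X → ℂ} {m : ι → X → ℝ}
    (hW : Integrable W μ) (hm : ∀ i, AEMeasurable (m i) μ) (hm_nonneg : ∀ᵐ x ∂μ, ∀ i, 0 ≤ m i x)
    (hm_sum : ∀ᵐ x ∂μ, ∑ i, m i x ≤ 1) (c : ℂ) {z : ℂ} (hz : ‖z‖ < 1) :
    HasSum (fun k : ι → ℕ => poch c (∑ i, k i) / (∏ i, ((k i).factorial : ℂ)) * z ^ (∑ i, k i) *
        ∫ x, W x * ((∏ i, m i x ^ k i : ℝ) : ℂ) ∂μ)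
      (∫ x, W x / (1 - ((∑ i, m i x : ℝ) : ℂ) * z) ^ c ∂μ) := by
  have hnorm : ∀ᵐ x ∂μ, ∑ i, ‖(m i x : ℂ) * z‖ ≤ ‖z‖ := by
    filter_upwards [hm_nonneg, hm_sum] with x hx hx_sum
    simp only [norm_mul, Complex.norm_of_nonneg (hx _), ← Finset.sum_mul]
    exact mul_le_of_le_one_left (norm_nonneg z) hx_sum
  have hterm (k : ι → ℕ) (x : X) :
      poch c (∑ i, k i) / (∏ i, ((k i).factorial : ℂ)) * z ^ (∑ i, k i) *
          (W x * ((∏ i, m i x ^ k i : ℝ) : ℂ)) =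
        W x * (poch c (∑ i, k i) / (∏ i, ((k i).factorial : ℂ)) *
          ∏ i, ((m i x : ℂ) * z) ^ k i) := by
    simp only [mul_pow, Finset.prod_mul_distrib, Finset.prod_pow_eq_pow_sum]
    push_cast
    ring
  simp only [← integral_const_mul, hterm]
  refine hasSum_integral_of_sum_norm_le
    (g := fun x => ‖W x‖ * ∑' N : ℕ, ‖poch c N / N.factorial‖ * ‖z‖ ^ N) (fun k => ?_)
    (hW.norm.mul_const _) ?_ ?_
  · refine hW.aestronglyMeasurable.mul (AEMeasurable.aestronglyMeasurable ?_)
    fun_prop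
  · filter_upwards [hnorm] with x hx t
    simp only [norm_mul (W x), ← Finset.mul_sum]
    exact mul_le_mul_of_nonneg_left
      (sum_norm_poch_div_prod_factorial_mul_prod_pow_le c hx hz t) (norm_nonneg _)
  · filter_upwards [hnorm] with x hx
    have hsum := hasSum_poch_div_prod_factorial_mul_prod_pow c (hx.trans_lt hz)
    simpa [Finset.sum_mul, div_eq_mul_inv] using hsum.mul_left (W x)

end Integral

/-- The density `x ^ (α - 1) (1 - x) ^ (β - α - 1)` of Euler's beta integral on `(0, 1)`, with
parameters arranged as in the hypergeometric integrals. -/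
noncomputable def betaWeight (α β : ℂ) (x : ℝ) : ℂ :=
  (x : ℂ) ^ (α - 1) * ((1 - x : ℝ) : ℂ) ^ (β - α - 1)

section BetaWeight

lemma betaWeight_mul_pow_mul_pow (α β : ℂ) (p q : ℕ) {x : ℝ} (hx : x ∈ Set.Ioo (0 : ℝ) 1) :
    betaWeight α β x * ((x ^ p * (1 - x) ^ q : ℝ) : ℂ) =
      betaWeight (α + p) (β + (p + q : ℕ)) x := by
  have hx0 : (x : ℂ) ≠ 0 := by exact_mod_cast hx.1.ne'
  have hx1 : ((1 - x : ℝ) : ℂ) ≠ 0 := by exact_mod_cast (sub_pos.2 hx.2).ne'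
  rw [betaWeight, betaWeight, show α + p - 1 = α - 1 + p by ring,
    show β + (p + q : ℕ) - (α + p) - 1 = β - α - 1 + q by push_cast; ring,
    Complex.cpow_add _ _ hx0, Complex.cpow_add _ _ hx1, Complex.cpow_natCast, Complex.cpow_natCast]
  push_cast
  ring

variable {α β : ℂ}

lemma integrableOn_betaWeight (hα : 0 < α.re) (hαβ : α.re < β.re) :
    IntegrableOn (betaWeight α β) (Set.Ioo 0 1) := by
  have hconv : IntervalIntegrable (betaWeight α β) volume 0 1 := by
    unfold betaWeight
    simpa using Complex.betaIntegral_convergent hα (v := β - α) (by simpa using hαβ)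
  exact (intervalIntegrable_iff_integrableOn_Ioo_of_le zero_le_one).1 hconv

lemma setIntegral_betaWeight (hα : 0 < α.re) (hαβ : α.re < β.re) :
    ∫ x in Set.Ioo (0 : ℝ) 1, betaWeight α β x =
      Complex.Gamma α * Complex.Gamma (β - α) / Complex.Gamma β := by
  have h := Complex.betaIntegral_eq_Gamma_mul_div α (β - α) hα (by simpa using hαβ)
  rw [add_sub_cancel] at h
  rw [← h, ← integral_Ioc_eq_integral_Ioo, ← intervalIntegral.integral_of_le zero_le_one]
  simp [betaWeight, Complex.betaIntegral]

lemma setIntegral_betaWeight_mul_pow_mul_pow (hα : 0 < α.re) (hαβ : α.re < β.re) (p q : ℕ) :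
    ∫ x in Set.Ioo (0 : ℝ) 1, betaWeight α β x * ((x ^ p * (1 - x) ^ q : ℝ) : ℂ) =
      Complex.Gamma α * Complex.Gamma (β - α) / Complex.Gamma β *
        (poch α p * poch (β - α) q / poch β (p + q)) := by
  have hβα : 0 < (β - α).re := by simpa using hαβ
  have hαp : 0 < (α + p).re := by simpa using add_pos_of_pos_of_nonneg hα p.cast_nonneg
  have hαβpq : (α + p).re < (β + (p + q : ℕ)).re := by
    simp only [Complex.add_re, Complex.natCast_re, Nat.cast_add]
    linarith [(q.cast_nonneg : (0 : ℝ) ≤ q)]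
  rw [setIntegral_congr_fun measurableSet_Ioo fun x hx => betaWeight_mul_pow_mul_pow α β p q hx,
    setIntegral_betaWeight hαp hαβpq,
    show β + (p + q : ℕ) - (α + p) = β - α + q by push_cast; ring,
    Gamma_add_natCast hα, Gamma_add_natCast hβα, Gamma_add_natCast (hα.trans hαβ)]
  ring

section Cube

variable {ι : Type*} [Fintype ι] {a b : ι → ℂ}

lemma volume_restrict_cube :
    (volume : Measure (ι → ℝ)).restrict (Set.univ.pi fun _ => Set.Ioo 0 1) =
      Measure.pi fun _ => volume.restrict (Set.Ioo 0 1) := by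
  rw [volume_pi, Measure.restrict_pi_pi]

lemma integrableOn_prod_betaWeight (ha : ∀ i, 0 < (a i).re) (hab : ∀ i, (a i).re < (b i).re) :
    IntegrableOn (fun x : ι → ℝ => ∏ i, betaWeight (a i) (b i) (x i))
      (Set.univ.pi fun _ => Set.Ioo 0 1) := by
  rw [IntegrableOn, volume_restrict_cube]
  exact Integrable.fintype_prod fun i => integrableOn_betaWeight (ha i) (hab i)

lemma setIntegral_prod_betaWeight_mul_prod_pow (ha : ∀ i, 0 < (a i).re)
    (hab : ∀ i, (a i).re < (b i).re) (p q : ι → ℕ) :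
    ∫ x in Set.univ.pi fun _ : ι => Set.Ioo (0 : ℝ) 1, (∏ i, betaWeight (a i) (b i) (x i)) *
        ((∏ i, (x i ^ p i * (1 - x i) ^ q i) : ℝ) : ℂ) =
      (∏ i, Complex.Gamma (a i) * Complex.Gamma (b i - a i) / Complex.Gamma (b i)) *
        ∏ i, poch (a i) (p i) * poch (b i - a i) (q i) / poch (b i) (p i + q i) := by
  simp only [volume_restrict_cube, Complex.ofReal_prod, ← Finset.prod_mul_distrib]
  rw [integral_fintype_prod_eq_prod fun i (t : ℝ) =>
    betaWeight (a i) (b i) t * ((t ^ p i * (1 - t) ^ q i : ℝ) : ℂ)]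
  exact Finset.prod_congr rfl fun i _ =>
    setIntegral_betaWeight_mul_pow_mul_pow (ha i) (hab i) (p i) (q i)

end Cube

end BetaWeight

section NestedExpression

lemma nestR_mem_Icc : ∀ {l : List ℝ}, (∀ t ∈ l, t ∈ Set.Icc 0 1) → nestR l ∈ Set.Icc 0 1
  | [], _ => by simp [nestR]
  | t :: l, hl => by
    obtain ⟨⟨ht0, ht1⟩, hl⟩ := List.forall_mem_cons.1 hl
    obtain ⟨hl0, hl1⟩ := nestR_mem_Icc hl
    exact ⟨sub_nonneg.2 (mul_le_one₀ hl1 ht0 ht1), sub_le_self 1 (mul_nonneg hl0 ht0)⟩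

lemma nestR_tail_mul_headI : ∀ {l : List ℝ}, l ≠ [] → nestR l.tail * l.headI = 1 - nestR l
  | t :: l, _ => (sub_sub_self 1 (nestR l * t)).symm

lemma one_sub_nestR_cons_cons (u v : ℝ) (l : List ℝ) :
    1 - nestR (u :: v :: l) = u * v * (1 - nestR l) + u * (1 - v) := by
  simp only [nestR]
  ring

/-- The decomposition of the variables `x₀, …, x_{2s-1}` of `J_{2s}` into the `s` consecutive pairs
`(x_{2s-2j-2}, x_{2s-2j-1})`. The pairs are numbered from the innermost one, as the summation
indices of the multisum are. -/
def pairEquiv (s : ℕ) : Fin s ⊕ Fin s ≃ Fin (2 * s) where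
  toFun := Sum.elim (fun j => ⟨2 * s - 2 * j - 2, by omega⟩) fun j => ⟨2 * s - 2 * j - 1, by omega⟩
  invFun i :=
    if i.1 % 2 = 0 then .inl ⟨s - 1 - i / 2, by omega⟩ else .inr ⟨s - 1 - i / 2, by omega⟩
  left_inv := by
    rintro (j | j)
    · have hparity : (2 * s - 2 * j - 2) % 2 = 0 := by omega
      simp only [Sum.elim_inl, hparity, if_true, Sum.inl.injEq, Fin.ext_iff]
      omega
    · have hparity : (2 * s - 2 * j - 1) % 2 ≠ 0 := by omega
      simp only [Sum.elim_inr, hparity, if_false, Sum.inr.injEq, Fin.ext_iff]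
      omega
  right_inv i := by
    by_cases hparity : i.1 % 2 = 0
    · simp only [hparity, if_true, Sum.elim_inl, Fin.ext_iff]
      omega
    · simp only [hparity, if_false, Sum.elim_inr, Fin.ext_iff]
      omega

section PairEquiv

variable {s : ℕ}

lemma pairEquiv_inl_val_add_one (j : Fin s) :
    (pairEquiv s (.inl j)).1 + 1 = 2 * s - 2 * j - 1 :=
  show 2 * s - 2 * j - 2 + 1 = 2 * s - 2 * j - 1 by omega

lemma pairEquiv_inr_val_add_one (j : Fin s) : (pairEquiv s (.inr j)).1 + 1 = 2 * s - 2 * j :=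
  show 2 * s - 2 * j - 1 + 1 = 2 * s - 2 * j by omega

lemma pairEquiv_inl_castSucc (j : Fin s) :
    pairEquiv (s + 1) (.inl j.castSucc) = (pairEquiv s (.inl j)).succ.succ :=
  Fin.ext (show 2 * (s + 1) - 2 * j - 2 = 2 * s - 2 * j - 2 + 1 + 1 by omega)

lemma pairEquiv_inr_castSucc (j : Fin s) :
    pairEquiv (s + 1) (.inr j.castSucc) = (pairEquiv s (.inr j)).succ.succ :=
  Fin.ext (show 2 * (s + 1) - 2 * j - 1 = 2 * s - 2 * j - 1 + 1 + 1 by omega)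

lemma pairEquiv_inl_last : pairEquiv (s + 1) (.inl (Fin.last s)) = 0 :=
  Fin.ext (show 2 * (s + 1) - 2 * s - 2 = 0 by omega)

lemma pairEquiv_inr_last : pairEquiv (s + 1) (.inr (Fin.last s)) = 1 :=
  Fin.ext ((show 2 * (s + 1) - 2 * s - 1 = 1 by omega).trans (Fin.val_one (2 * s)).symm)

end PairEquiv

/-- The `j`-th monomial in the expansion of `1 - nestR` along pairs of variables
`(y (inl i), y (inr i))`, the pair of index `0` being the innermost one. -/
def nestMonomial {s : ℕ} {R : Type*} [CommRing R] (y : Fin s ⊕ Fin s → R) (j : Fin s) : R :=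
  (∏ i ∈ Finset.Ioi j, y (.inl i) * y (.inr i)) * (y (.inl j) * (1 - y (.inr j)))

lemma prod_Ioi_castSucc {M : Type*} [CommMonoid M] {n : ℕ} (f : Fin (n + 1) → M) (j : Fin n) :
    ∏ i ∈ Finset.Ioi j.castSucc, f i = (∏ i ∈ Finset.Ioi j, f i.castSucc) * f (Fin.last n) := by
  simp only [← Finset.filter_lt_eq_Ioi, Finset.prod_filter, Fin.prod_univ_castSucc,
    Fin.castSucc_lt_castSucc_iff, Fin.castSucc_lt_last, if_true]

theorem sum_nestMonomial_pairEquiv : ∀ (s : ℕ) (x : Fin (2 * s) → ℝ),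
    ∑ j, nestMonomial (x ∘ pairEquiv s) j = 1 - nestR (List.ofFn x)
  | 0, _ => by simp [nestR]
  | s + 1, x => by
    have hlist : List.ofFn x = x 0 :: x 1 :: List.ofFn fun i : Fin (2 * s) => x i.succ.succ := by
      simp [List.ofFn_succ]
    have hinit (j : Fin s) :
        nestMonomial (x ∘ pairEquiv (s + 1)) j.castSucc =
          x 0 * x 1 * nestMonomial ((fun i : Fin (2 * s) => x i.succ.succ) ∘ pairEquiv s) j := by
      simp only [nestMonomial, prod_Ioi_castSucc, Function.comp_apply, pairEquiv_inl_castSucc,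
        pairEquiv_inr_castSucc, pairEquiv_inl_last, pairEquiv_inr_last]
      ring
    have hlast : nestMonomial (x ∘ pairEquiv (s + 1)) (Fin.last s) = x 0 * (1 - x 1) := by
      simp [nestMonomial, show Finset.Ioi (Fin.last s) = ∅ from Finset.Ioi_top,
        pairEquiv_inl_last, pairEquiv_inr_last]
    rw [Fin.sum_univ_castSucc, hlast, hlist, one_sub_nestR_cons_cons, ← sum_nestMonomial_pairEquiv,
      Finset.mul_sum]
    simp only [hinit]

lemma nestMonomial_nonneg {s : ℕ} {y : Fin s ⊕ Fin s → ℝ} (hy : ∀ i, y i ∈ Set.Icc 0 1)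
    (j : Fin s) : 0 ≤ nestMonomial y j :=
  mul_nonneg (Finset.prod_nonneg fun _ _ => mul_nonneg (hy _).1 (hy _).1)
    (mul_nonneg (hy _).1 (sub_nonneg.2 (hy _).2))

lemma sum_nestMonomial_pairEquiv_le_one {s : ℕ} {x : Fin (2 * s) → ℝ}
    (hx : ∀ i, x i ∈ Set.Icc 0 1) : ∑ j, nestMonomial (x ∘ pairEquiv s) j ≤ 1 := by
  rw [sum_nestMonomial_pairEquiv]
  exact sub_le_self 1 (nestR_mem_Icc (List.forall_mem_ofFn_iff.2 hx)).1

lemma prod_nestMonomial_pow {s : ℕ} {R : Type*} [CommRing R] (y : Fin s ⊕ Fin s → R)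
    (k : Fin s → ℕ) :
    ∏ j, nestMonomial y j ^ k j =
      ∏ j, y (.inl j) ^ (∑ i ∈ Finset.Iic j, k i) *
        (y (.inr j) ^ (∑ i ∈ Finset.Iio j, k i) * (1 - y (.inr j)) ^ k j) := by
  have hpairs : ∏ j, (∏ i ∈ Finset.Ioi j, y (.inl i) * y (.inr i)) ^ k j =
      ∏ j, (y (.inl j) * y (.inr j)) ^ ∑ i ∈ Finset.Iio j, k i := by
    simp only [← Finset.prod_pow, ← Finset.prod_pow_eq_pow_sum]
    exact Finset.prod_comm' (by simp)
  calc ∏ j, nestMonomial y j ^ k j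
      = (∏ j, (∏ i ∈ Finset.Ioi j, y (.inl i) * y (.inr i)) ^ k j) *
          ∏ j, (y (.inl j) * (1 - y (.inr j))) ^ k j := by
        simp only [nestMonomial, mul_pow _ (_ * _), Finset.prod_mul_distrib]
    _ = ∏ j, (y (.inl j) * y (.inr j)) ^ (∑ i ∈ Finset.Iio j, k i) *
          (y (.inl j) * (1 - y (.inr j))) ^ k j := by
        rw [hpairs, Finset.prod_mul_distrib]
    _ = _ := Finset.prod_congr rfl fun j _ => by
        rw [← Finset.sum_Iio_add_eq_sum_Iic, mul_pow, mul_pow]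
        ring

end NestedExpression

lemma prod_sum_Iio_mul_eq_prod_sum_Iic {M : Type*} [CommMonoid M] {s : ℕ} {F : ℕ → ℕ → M}
    (hF : F 0 0 = 1) (k : Fin s → ℕ) :
    (∏ j : Fin s, F j (∑ i ∈ Finset.Iio j, k i)) * F s (∑ i, k i) =
      ∏ j : Fin s, F (j + 1) (∑ i ∈ Finset.Iic j, k i) := by
  have hIio (j : Fin s) : ∑ i ∈ Finset.Iio j, k i = ∑ i : Fin s with i.1 < j.1, k i := by
    rw [← Finset.filter_gt_eq_Iio]
    rfl
  have hIic (j : Fin s) : ∑ i ∈ Finset.Iic j, k i = ∑ i : Fin s with i.1 < j.1 + 1, k i := by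
    simp only [← Finset.filter_ge_eq_Iic, Fin.le_def, Nat.lt_succ_iff]
  have huniv : ∑ i, k i = ∑ i : Fin s with i.1 < s, k i := by simp
  simp only [hIio, hIic, huniv]
  rw [Fin.prod_univ_eq_prod_range (fun n => F n (∑ i : Fin s with i.1 < n, k i)) s,
    Fin.prod_univ_eq_prod_range (fun n => F (n + 1) (∑ i : Fin s with i.1 < n + 1, k i)) s,
    ← Finset.prod_range_succ, Finset.prod_range_succ']
  simp [hF]

theorem setIntegral_prod_betaWeight_mul_prod_nestMonomial_pow {s : ℕ} {a b : Fin (2 * s) → ℂ}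
    (ha : ∀ i, 0 < (a i).re) (hab : ∀ i, (a i).re < (b i).re) (k : Fin s → ℕ) :
    ∫ x in Set.univ.pi fun _ : Fin (2 * s) => Set.Ioo (0 : ℝ) 1,
        (∏ i, betaWeight (a i) (b i) (x i)) *
          ((∏ j, nestMonomial (x ∘ pairEquiv s) j ^ k j : ℝ) : ℂ) =
      (∏ i, Complex.Gamma (a i) * Complex.Gamma (b i - a i) / Complex.Gamma (b i)) *
        ∏ j,
          (poch (a (pairEquiv s (.inl j))) (∑ i ∈ Finset.Iic j, k i) /
            poch (b (pairEquiv s (.inl j))) (∑ i ∈ Finset.Iic j, k i)) *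
          (poch (a (pairEquiv s (.inr j))) (∑ i ∈ Finset.Iio j, k i) *
              poch (b (pairEquiv s (.inr j)) - a (pairEquiv s (.inr j))) (k j) /
            poch (b (pairEquiv s (.inr j))) (∑ i ∈ Finset.Iic j, k i)) := by
  set p : Fin s ⊕ Fin s → ℕ :=
    Sum.elim (fun j => ∑ i ∈ Finset.Iic j, k i) fun j => ∑ i ∈ Finset.Iio j, k i with hp
  set q : Fin s ⊕ Fin s → ℕ := Sum.elim 0 k with hq
  have hpow (x : Fin (2 * s) → ℝ) : ∏ j, nestMonomial (x ∘ pairEquiv s) j ^ k j =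
      ∏ i, x i ^ p ((pairEquiv s).symm i) * (1 - x i) ^ q ((pairEquiv s).symm i) := by
    rw [prod_nestMonomial_pow, ← (pairEquiv s).prod_comp, Fintype.prod_sum_type,
      ← Finset.prod_mul_distrib]
    simp [hp, hq]
  simp only [hpow]
  rw [setIntegral_prod_betaWeight_mul_prod_pow ha hab, ← (pairEquiv s).prod_comp fun i =>
    poch (a i) (p ((pairEquiv s).symm i)) * poch (b i - a i) (q ((pairEquiv s).symm i)) /
      poch (b i) (p ((pairEquiv s).symm i) + q ((pairEquiv s).symm i)),
    Fintype.prod_sum_type, ← Finset.prod_mul_distrib]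
  simp [hp, hq, poch_zero, Finset.sum_Iio_add_eq_sum_Iic]

section MultisumExpansion

variable {s : ℕ}

lemma Jint_eq_setIntegral_prod_betaWeight (hs : 1 ≤ s) (a b : ℕ → ℂ) (z : ℂ) :
    Jint (2 * s) a b z =
      ∫ x in Set.univ.pi fun _ : Fin (2 * s) => Set.Ioo (0 : ℝ) 1,
        (∏ i : Fin (2 * s), betaWeight (a (i + 1)) (b (i + 1)) (x i)) /
          (1 - ((∑ j, nestMonomial (x ∘ pairEquiv s) j : ℝ) : ℂ) * z) ^ a 0 := by
  have hne (x : Fin (2 * s) → ℝ) : List.ofFn x ≠ [] := by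
    rw [Ne, List.ofFn_eq_nil_iff]
    omega
  simp only [Jint, betaWeight, nestR_tail_mul_headI (hne _), sum_nestMonomial_pairEquiv]

lemma hasSum_Jint (hs : 1 ≤ s) {a b : ℕ → ℂ} {z : ℂ} (hz : ‖z‖ < 1)
    (hab : ∀ i, 1 ≤ i → i ≤ 2 * s → (a i).re < (b i).re ∧ 0 < (a i).re) :
    HasSum (fun k : Fin s → ℕ =>
        poch (a 0) (∑ j, k j) / (∏ j, ((k j).factorial : ℂ)) * z ^ (∑ j, k j) *
          ∫ x in Set.univ.pi fun _ : Fin (2 * s) => Set.Ioo (0 : ℝ) 1,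
            (∏ i : Fin (2 * s), betaWeight (a (i + 1)) (b (i + 1)) (x i)) *
              ((∏ j, nestMonomial (x ∘ pairEquiv s) j ^ k j : ℝ) : ℂ))
      (Jint (2 * s) a b z) := by
  have hcube : ∀ᵐ x : Fin (2 * s) → ℝ ∂volume.restrict (Set.univ.pi fun _ => Set.Ioo 0 1),
      ∀ i, x i ∈ Set.Icc 0 1 := by
    filter_upwards [ae_restrict_mem (.univ_pi fun _ => measurableSet_Ioo)] with x hx i
    exact Set.Ioo_subset_Icc_self (hx i trivial)
  have hmeas (j : Fin s) :
      Measurable fun x : Fin (2 * s) → ℝ => nestMonomial (x ∘ pairEquiv s) j := by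
    simp only [nestMonomial, Function.comp_apply]
    fun_prop
  rw [Jint_eq_setIntegral_prod_betaWeight hs]
  exact hasSum_integral_div_one_sub_sum_cpow
    (integrableOn_prod_betaWeight (fun i => (hab _ (by omega) (by omega)).2)
      fun i => (hab _ (by omega) (by omega)).1)
    (fun j => (hmeas j).aemeasurable)
    (hcube.mono fun x hx => nestMonomial_nonneg fun i => hx _)
    (hcube.mono fun x hx => sum_nestMonomial_pairEquiv_le_one hx) (a 0) hz

lemma prod_poch_Iio_mul_poch_sum (a : ℕ → ℂ) (k : Fin s → ℕ) :
    (∏ j : Fin s, poch (a (2 * s - 2 * j)) (∑ i ∈ Finset.Iio j, k i)) * poch (a 0) (∑ j, k j) =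
      ∏ j : Fin s, poch (a (2 * s - 2 * j - 2)) (∑ i ∈ Finset.Iic j, k i) := by
  simpa [mul_add, Nat.sub_add_eq] using
    prod_sum_Iio_mul_eq_prod_sum_Iic (F := fun n => poch (a (2 * s - 2 * n))) (poch_zero _) k

lemma prod_fin_add_one_eq_prod_Icc {M : Type*} [CommMonoid M] (f : ℕ → M) (n : ℕ) :
    ∏ i : Fin n, f (i + 1) = ∏ j ∈ Finset.Icc 1 n, f j := by
  rw [Fin.prod_univ_eq_prod_range fun i => f (i + 1), Finset.range_eq_Ico, Finset.prod_Ico_add',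
    zero_add, Finset.Ico_add_one_right_eq_Icc]

theorem poch_div_prod_factorial_mul_setIntegral {a b : ℕ → ℂ}
    (hab : ∀ i, 1 ≤ i → i ≤ 2 * s → (a i).re < (b i).re ∧ 0 < (a i).re) (k : Fin s → ℕ) :
    poch (a 0) (∑ j, k j) / (∏ j, ((k j).factorial : ℂ)) *
        ∫ x in Set.univ.pi fun _ : Fin (2 * s) => Set.Ioo (0 : ℝ) 1,
          (∏ i : Fin (2 * s), betaWeight (a (i + 1)) (b (i + 1)) (x i)) *
            ((∏ j, nestMonomial (x ∘ pairEquiv s) j ^ k j : ℝ) : ℂ) =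
      (∏ j ∈ Finset.Icc 1 (2 * s),
        Complex.Gamma (a j) * Complex.Gamma (b j - a j) / Complex.Gamma (b j)) *
      ∏ j : Fin s,
        (poch (b (2 * s - 2 * j) - a (2 * s - 2 * j)) (k j) / ((k j).factorial : ℂ)) *
        (poch (a (2 * s - 2 * j - 1)) (∑ i ∈ Finset.Iic j, k i) /
          poch (b (2 * s - 2 * j - 1)) (∑ i ∈ Finset.Iic j, k i)) *
        (poch (a (2 * s - 2 * j - 2)) (∑ i ∈ Finset.Iic j, k i) /
          poch (b (2 * s - 2 * j)) (∑ i ∈ Finset.Iic j, k i)) := by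
  rw [setIntegral_prod_betaWeight_mul_prod_nestMonomial_pow
    (a := fun i : Fin (2 * s) => a (i + 1)) (b := fun i : Fin (2 * s) => b (i + 1))
    (fun i => (hab _ (by omega) (by omega)).2) fun i => (hab _ (by omega) (by omega)).1,
    prod_fin_add_one_eq_prod_Icc fun j =>
      Complex.Gamma (a j) * Complex.Gamma (b j - a j) / Complex.Gamma (b j)]
  simp only [pairEquiv_inl_val_add_one, pairEquiv_inr_val_add_one, Finset.prod_mul_distrib,
    Finset.prod_div_distrib, ← prod_poch_Iio_mul_poch_sum]
  ring

end MultisumExpansion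

theorem J_even_multisum_general (s : ℕ) (hs : 1 ≤ s) (z : ℂ) (hz : ‖z‖ < 1) (a b : ℕ → ℂ)
    (hab : ∀ i : ℕ, 1 ≤ i → i ≤ 2 * s → (a i).re < (b i).re ∧ 0 < (a i).re) :
    Jint (2 * s) a b z =
      (∏ j ∈ Finset.Icc 1 (2 * s),
        Complex.Gamma (a j) * Complex.Gamma (b j - a j) / Complex.Gamma (b j)) *
      ∑' k : Fin s → ℕ, z ^ (∑ j, k j) *
        ∏ j : Fin s,
          (poch (b (2 * s - 2 * j.1) - a (2 * s - 2 * j.1)) (k j) / (Nat.factorial (k j) : ℂ)) *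
          (poch (a (2 * s - 2 * j.1 - 1)) (∑ i ∈ Finset.Iic j, k i) /
            poch (b (2 * s - 2 * j.1 - 1)) (∑ i ∈ Finset.Iic j, k i)) *
          (poch (a (2 * s - 2 * j.1 - 2)) (∑ i ∈ Finset.Iic j, k i) /
            poch (b (2 * s - 2 * j.1)) (∑ i ∈ Finset.Iic j, k i)) := by
  rw [← (hasSum_Jint hs hz hab).tsum_eq, ← tsum_mul_left]
  refine tsum_congr fun k => ?_
  rw [mul_right_comm, poch_div_prod_factorial_mul_setIntegral hab]
  ring

/-- the multisum expansion of the Vasilyev-type integral, even case. -/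
theorem J_even_multisum (s : ℕ) (hs : 1 ≤ s) (z : ℂ) (hz : ‖z‖ < 1) (a b : ℕ → ℂ)
    (ha0 : 0 < (a 0).re)
    (hab : ∀ i : ℕ, 1 ≤ i → i ≤ 2*s → (a i).re < (b i).re ∧ 0 < (a i).re) :
    Jint (2*s) a b z =
      (∏ j ∈ Finset.Icc 1 (2*s),
        Complex.Gamma (a j) * Complex.Gamma (b j - a j) / Complex.Gamma (b j)) *
      ∑' k : Fin s → ℕ, z ^ (∑ j, k j) *
        ∏ j : Fin s,
          (poch (b (2*s - 2*j.1) - a (2*s - 2*j.1)) (k j) / (Nat.factorial (k j) : ℂ)) *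
          (poch (a (2*s - 2*j.1 - 1)) (∑ i ∈ Finset.Iic j, k i) /
            poch (b (2*s - 2*j.1 - 1)) (∑ i ∈ Finset.Iic j, k i)) *
          (poch (a (2*s - 2*j.1 - 2)) (∑ i ∈ Finset.Iic j, k i) /
            poch (b (2*s - 2*j.1)) (∑ i ∈ Finset.Iic j, k i)) :=
  J_even_multisum_general s hs z hz a b hab
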